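/- Gronwall inequality for systems: Let G, H : [0,T] → ℝ^{n×n} be continuous with nonnegative entries, and let z, a : [0,T] → ℝ^n be continuous with z(t) ≤ a(t) + G(t) ∫_0^t H(s) z(s) ds componentwise for all t ∈ [0,T]. Let V(t,τ) solve V(t,τ) = I + ∫_τ^t H(s) G(s) V(s,τ) ds. Then z(t) ≤ a(t) + G(t) ∫_0^t V(t,s) H(s) a(s) ds componentwise for all t ∈ [0,T]. -/

import Mathlib

open Matrix

open MeasureTheory Set in
lemma gs_gronwall {m : ℝ → ℝ} {a b c K : ℝ} (hm : ContinuousOn m (Icc a b)) (hK : 0 ≤ K)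
    (h : ∀ t ∈ Icc a b, m t ≤ c + K * ∫ s in a..t, m s) :
    ∀ t ∈ Icc a b, m t ≤ c * Real.exp (K * (t - a)) := by
  intro t ht
  have hab : a ≤ b := ht.1.trans ht.2
  set M : ℝ → ℝ := IccExtend hab ((Icc a b).domRestrict m) with hM
  have hMc : Continuous M := (continuousOn_iff_continuous_domRestrict.1 hm).Icc_extend'
  have hMm : ∀ s ∈ Icc a b, M s = m s := fun s hs => IccExtend_of_mem hab _ hs
  have hintg : ∀ t ∈ Icc a b, ∫ s in a..t, m s = ∫ s in a..t, M s := by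
    intro t ht
    apply intervalIntegral.integral_congr
    intro s hs
    rw [uIcc_of_le ht.1] at hs
    exact (hMm s ⟨hs.1, hs.2.trans ht.2⟩).symm
  have hd : ∀ t, HasDerivAt (fun t => c + K * ∫ s in a..t, M s) (K * M t) t := fun t =>
    ((hMc.integral_hasStrictDerivAt a t).hasDerivAt.const_mul K).const_add c
  have key := le_gronwallBound_of_liminf_deriv_right_le (f := fun t => c + K * ∫ s in a..t, M s)
    (f' := fun t => K * M t) (δ := c) (K := K) (ε := 0) (a := a) (b := b)
    (fun t _ => (hd t).continuousAt.continuousWithinAt)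
    (fun x _ r hr => (hd x).hasDerivWithinAt.liminf_right_slope_le hr) (by simp)
    (by
      intro x hx
      have hx' : x ∈ Icc a b := ⟨hx.1, hx.2.le⟩
      have := h x hx'
      rw [hintg x hx', ← hMm x hx'] at this
      simpa using mul_le_mul_of_nonneg_left this hK) t ht
  rw [gronwallBound_ε0] at key
  have := h t ht
  rw [hintg t ht] at this
  exact this.trans key

open MeasureTheory Set in
lemma gs_bound {n : ℕ} {a b : ℝ} {A : ℝ → Matrix (Fin n) (Fin n) ℝ}
    (hA : ∀ i j, ContinuousOn (fun t => A t i j) (Icc a b)) :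
    ∃ K, 0 ≤ K ∧ ∀ t ∈ Icc a b, ∀ i j, |A t i j| ≤ K := by
  have : ∀ i j, ∃ K, ∀ t ∈ Icc a b, |A t i j| ≤ K := by
    intro i j
    obtain ⟨K, hK⟩ := isCompact_Icc.exists_bound_of_continuousOn (hA i j)
    exact ⟨K, hK⟩
  choose K hK using this
  refine ⟨∑ i, ∑ j, |K i j|, by positivity, fun t ht i j => ?_⟩
  calc |A t i j| ≤ |K i j| := (hK i j t ht).trans (le_abs_self _)
    _ ≤ ∑ j, |K i j| := Finset.single_le_sum (f := fun j => |K i j|) (fun _ _ => abs_nonneg _) (Finset.mem_univ j)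
    _ ≤ _ := Finset.single_le_sum (f := fun i => ∑ j, |K i j|)
        (fun _ _ => Finset.sum_nonneg fun _ _ => abs_nonneg _) (Finset.mem_univ i)

open MeasureTheory Set in
lemma gs_contOn_mulVec {n : ℕ} {S : Set ℝ} {A : ℝ → Matrix (Fin n) (Fin n) ℝ} {x : ℝ → Fin n → ℝ}
    (hA : ∀ i j, ContinuousOn (fun t => A t i j) S)
    (hx : ∀ i, ContinuousOn (fun t => x t i) S) (i : Fin n) :
    ContinuousOn (fun t => (A t *ᵥ x t) i) S := by
  simp only [mulVec, dotProduct]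
  exact continuousOn_finsetSum _ fun j _ => (hA i j).mul (hx j)

open MeasureTheory Set in
lemma gs_reg {n : ℕ} {a b : ℝ} (hab : a ≤ b) {A : ℝ → Matrix (Fin n) (Fin n) ℝ}
    (hA : ∀ i j, ContinuousOn (fun t => A t i j) (Icc a b)) {x : ℝ → Fin n → ℝ} {c : Fin n → ℝ}
    (hx : ∀ t ∈ Icc a b, ∀ i, x t i = c i + ∫ s in a..t, (A s *ᵥ x s) i) :
    ∀ i, IntervalIntegrable (fun s => (A s *ᵥ x s) i) volume a b := by
  -- integrability of `x` gives integrability of `A x`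
  have hf : ∀ r t, a ≤ r → r ≤ t → t ≤ b →
      (∀ i, IntervalIntegrable (fun s => x s i) volume r t) →
      ∀ i, IntervalIntegrable (fun s => (A s *ᵥ x s) i) volume r t := by
    intro r t har hrt htb h i
    simp only [mulVec, dotProduct]
    have : (fun s => ∑ j, A s i j * x s j) = ∑ j, fun s => A s i j * x s j := by
      ext s; simp
    rw [this]
    refine IntervalIntegrable.sum _ fun j _ => ?_
    refine (h j).continuousOn_mul ((hA i j).mono ?_)
    rw [uIcc_of_le hrt]
    exact Icc_subset_Icc har htb
  have hmono : ∀ r t, a ≤ r → r ≤ t → ∀ i,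
      IntervalIntegrable (fun s => (A s *ᵥ x s) i) volume a t →
      IntervalIntegrable (fun s => (A s *ᵥ x s) i) volume a r := by
    intro r t har hrt i h
    refine h.mono_set ?_
    rw [uIcc_of_le har, uIcc_of_le (har.trans hrt)]
    exact Icc_subset_Icc_right hrt
  have hcont : ∀ t, a ≤ t → t ≤ b → ∀ i,
      IntervalIntegrable (fun s => (A s *ᵥ x s) i) volume a t →
      ContinuousOn (fun s => x s i) (Icc a t) := by
    intro t hat htb i h
    have h1 := intervalIntegral.continuousOn_primitive_interval' h left_mem_uIcc
    rw [uIcc_of_le hat] at h1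
    exact (continuousOn_const.add h1).congr fun s hs => hx s ⟨hs.1, hs.2.trans htb⟩ i
  obtain ⟨K, hK0, hK⟩ := gs_bound hA
  set C := ∑ i, |c i| with hC
  have hbd : ∀ t, a ≤ t → t ≤ b →
      (∀ i, IntervalIntegrable (fun s => (A s *ᵥ x s) i) volume a t) →
      ∑ i, |x t i| ≤ C * Real.exp ((n * K) * (b - a)) := by
    intro t hat htb h
    have hxc := fun i => hcont t hat htb i (h i)
    have hmc : ContinuousOn (fun s => ∑ i, |x s i|) (Icc a t) :=
      continuousOn_finsetSum _ fun i _ => (hxc i).abs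
    have hnK : 0 ≤ n * K := by positivity
    refine (gs_gronwall (c := C) hmc hnK ?_ t ⟨hat, le_rfl⟩).trans ?_
    · intro r hr
      have hmr : IntervalIntegrable (fun s => ∑ i, |x s i|) volume a r :=
        (hmc.mono (by rw [uIcc_of_le hr.1]; exact Icc_subset_Icc_right hr.2)).intervalIntegrable
      have : ∀ i, |x r i| ≤ |c i| + K * ∫ s in a..r, ∑ i, |x s i| := by
        intro i
        rw [hx r ⟨hr.1, hr.2.trans htb⟩ i]
        refine (abs_add_le _ _).trans ?_
        gcongr
        rw [← intervalIntegral.integral_const_mul]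
        refine (intervalIntegral.abs_integral_le_integral_abs hr.1).trans ?_
        refine intervalIntegral.integral_mono_on hr.1 ((hmono r t hr.1 hr.2 i (h i)).abs)
          (hmr.const_mul K) ?_
        intro s hs
        simp only [mulVec, dotProduct]
        rw [Finset.mul_sum]
        refine (Finset.abs_sum_le_sum_abs _ _).trans (Finset.sum_le_sum fun j _ => ?_)
        rw [abs_mul]
        gcongr
        exact hK s ⟨hs.1, hs.2.trans (hr.2.trans htb)⟩ i j
      refine (Finset.sum_le_sum fun i _ => this i).trans ?_
      rw [Finset.sum_add_distrib]
      simp [mul_assoc, hC]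
    · have : 0 ≤ C := by positivity
      gcongr
  set J : Set ℝ := {t | ∀ i, IntervalIntegrable (fun s => (A s *ᵥ x s) i) volume a t} with hJ
  have hIco : ∀ t, a ≤ t → t ≤ b → Ico a t ⊆ J → t ∈ J := by
    intro t hat htb hsub
    refine hf a t le_rfl hat htb fun i => ?_
    rw [intervalIntegrable_iff_integrableOn_Ico_of_le hat]
    refine Integrable.of_bound ?_ (C * Real.exp ((n * K) * (b - a))) ?_
    · have : ContinuousOn (fun s => x s i) (Ico a t) := by
        intro s hs
        obtain ⟨r, hr1, hr2⟩ := exists_between hs.2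
        have h1 := hcont r (hs.1.trans hr1.le) (hr2.le.trans htb) i
          (hsub ⟨hs.1.trans hr1.le, hr2⟩ i) s ⟨hs.1, hr1.le⟩
        refine h1.mono_of_mem_nhdsWithin ?_
        filter_upwards [self_mem_nhdsWithin, mem_nhdsWithin_of_mem_nhds (Iio_mem_nhds hr1)] with y hy hy'
        exact ⟨hy.1, le_of_lt hy'⟩
      exact this.aestronglyMeasurable measurableSet_Ico
    · refine (ae_restrict_iff' measurableSet_Ico).2 (Filter.Eventually.of_forall fun s hs => ?_)
      refine le_trans ?_ (hbd s hs.1 (hs.2.le.trans htb) (hsub hs))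
      exact Finset.single_le_sum (f := fun i => |x s i|) (fun _ _ => abs_nonneg _) (Finset.mem_univ i)
  have hclosed : IsClosed (J ∩ Icc a b) := by
    refine isClosed_of_closure_subset fun t ht => ?_
    have htI : t ∈ Icc a b := closure_minimal inter_subset_right isClosed_Icc ht
    refine ⟨hIco t htI.1 htI.2 fun s hs i => ?_, htI⟩
    obtain ⟨r, hr, hrJ⟩ := mem_closure_iff.1 ht (Ioi s) isOpen_Ioi hs.2
    exact hmono s r hs.1 (le_of_lt hr) i (hrJ.1 i)
  refine hclosed.mem_of_ge_of_forall_exists_gt (by simp [hJ]) hab ?_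
  rintro t ⟨htJ, hat, htb⟩
  have hev : ∀ i, ∀ᶠ r in nhdsWithin t (Ioi t), IntervalIntegrable (fun s => x s i) volume t r := by
    intro i
    by_cases hex : ∃ r ∈ Ioc t b, IntervalIntegrable (fun s => (A s *ᵥ x s) i) volume a r
    · obtain ⟨r, hr, hri⟩ := hex
      filter_upwards [Ioc_mem_nhdsGT hr.1] with u hu
      refine ContinuousOn.intervalIntegrable ((hcont r (hat.trans hr.1.le) hr.2 i hri).mono ?_)
      rw [uIcc_of_le hu.1.le]
      exact Icc_subset_Icc hat hu.2
    · push Not at hex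
      filter_upwards [Ioc_mem_nhdsGT htb] with u hu
      refine (intervalIntegrable_const (c := c i)).congr ?_
      intro s hs
      rw [uIoc_of_le hu.1.le] at hs
      have hs' : s ∈ Ioc t b := ⟨hs.1, hs.2.trans hu.2⟩
      simp only
      rw [hx s ⟨hat.trans hs.1.le, hs'.2⟩ i, intervalIntegral.integral_undef (hex s hs')]
      simp
  obtain ⟨r, hr1, hr2⟩ := ((Filter.eventually_all.2 hev).and (Ioc_mem_nhdsGT htb)).exists
  exact ⟨r, fun i => (htJ i).trans (hf t r hat hr2.1.le hr2.2 hr1 i), hr2⟩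

open MeasureTheory Set in
lemma gs_reg2 {n : ℕ} {T τ : ℝ} (hτ : τ ∈ Icc 0 T) {A : ℝ → Matrix (Fin n) (Fin n) ℝ}
    (hA : ∀ i j, ContinuousOn (fun t => A t i j) (Icc 0 T)) {x : ℝ → Fin n → ℝ} {c : Fin n → ℝ}
    (hx : ∀ t ∈ Icc 0 T, ∀ i, x t i = c i + ∫ s in τ..t, (A s *ᵥ x s) i) :
    ∀ i, IntervalIntegrable (fun s => (A s *ᵥ x s) i) volume 0 T := by
  intro i
  have h1 := gs_reg hτ.2 (A := A) (x := x) (c := c)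
    (fun i j => (hA i j).mono (Icc_subset_Icc_left hτ.1))
    (fun t ht i => hx t ⟨hτ.1.trans ht.1, ht.2⟩ i) i
  have h2 := gs_reg (a := -τ) (b := 0) (by linarith [hτ.1]) (A := fun t => -A (-t))
    (x := fun t => x (-t)) (c := c)
    (fun i j => by
      have : ContinuousOn (fun t => A (-t) i j) (Icc (-τ) 0) :=
        (hA i j).comp continuousOn_neg fun t ht => ⟨by linarith [ht.2], by linarith [ht.1, hτ.2]⟩
      exact this.neg)
    (fun t ht i => by
      have e := hx (-t) ⟨by linarith [ht.2], by linarith [ht.1, hτ.2]⟩ i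
      rw [e]
      simp only [neg_mulVec, Pi.neg_apply, intervalIntegral.integral_neg]
      rw [intervalIntegral.integral_comp_neg (fun s => (A s *ᵥ x s) i), neg_neg,
        intervalIntegral.integral_symm (-t) τ]) i
  have h3 : IntervalIntegrable (fun s => (A s *ᵥ x s) i) volume 0 τ := by
    have h4 : IntervalIntegrable (fun s => (A (-s) *ᵥ x (-s)) i) volume (-τ) 0 := by
      refine h2.neg.congr fun s _ => ?_
      simp [neg_mulVec]
    rw [IntervalIntegrable.iff_comp_neg]
    simpa using h4.symm
  exact h3.trans h1

open MeasureTheory Set in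
lemma gs_pos {n : ℕ} {a b : ℝ} {A : ℝ → Matrix (Fin n) (Fin n) ℝ}
    (hA : ∀ i j, ContinuousOn (fun t => A t i j) (Icc a b))
    (hA0 : ∀ t ∈ Icc a b, ∀ i j, 0 ≤ A t i j) {d : ℝ → Fin n → ℝ}
    (hd : ∀ i, ContinuousOn (fun t => d t i) (Icc a b))
    (h : ∀ t ∈ Icc a b, ∀ i, ∫ s in a..t, (A s *ᵥ d s) i ≤ d t i) :
    ∀ t ∈ Icc a b, ∀ i, 0 ≤ d t i := by
  obtain ⟨K, hK0, hK⟩ := gs_bound hA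
  have hmc : ContinuousOn (fun s => ∑ i, max (-d s i) 0) (Icc a b) :=
    continuousOn_finsetSum _ fun i _ => ContinuousOn.sup (hd i).neg continuousOn_const
  have key := gs_gronwall (c := 0) (K := n * K) hmc (by positivity) (by
    intro r hr
    have hsub : uIcc a r ⊆ Icc a b := by
      rw [uIcc_of_le hr.1]; exact Icc_subset_Icc_right hr.2
    have hmr : IntervalIntegrable (fun s => ∑ i, max (-d s i) 0) volume a r :=
      (hmc.mono hsub).intervalIntegrable
    have hm0 : ∀ s, 0 ≤ ∑ i, max (-d s i) 0 := fun s =>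
      Finset.sum_nonneg fun _ _ => le_max_right _ _
    have : ∀ i, max (-d r i) 0 ≤ K * ∫ s in a..r, ∑ i, max (-d s i) 0 := by
      intro i
      refine max_le ?_ (mul_nonneg hK0 (intervalIntegral.integral_nonneg hr.1 fun s _ => hm0 s))
      refine (neg_le_neg (h r hr i)).trans ?_
      rw [← intervalIntegral.integral_const_mul, ← intervalIntegral.integral_neg]
      refine intervalIntegral.integral_mono_on hr.1
        (((gs_contOn_mulVec hA hd i).mono hsub).neg.intervalIntegrable) (hmr.const_mul K) ?_
      intro s hs
      have hs' : s ∈ Icc a b := ⟨hs.1, hs.2.trans hr.2⟩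
      simp only [mulVec, dotProduct]
      rw [Finset.mul_sum, ← Finset.sum_neg_distrib]
      refine Finset.sum_le_sum fun j _ => ?_
      rw [← mul_neg]
      calc A s i j * -d s j ≤ A s i j * max (-d s j) 0 :=
            mul_le_mul_of_nonneg_left (le_max_left _ _) (hA0 s hs' i j)
        _ ≤ _ := mul_le_mul_of_nonneg_right ((le_abs_self _).trans (hK s hs' i j)) (le_max_right _ _)
    refine (Finset.sum_le_sum fun i _ => this i).trans ?_
    simp [mul_assoc])
  intro t ht i
  have h1 := key t ht
  have h2 := Finset.single_le_sum (f := fun i => max (-d t i) 0) (fun _ _ => le_max_right _ _)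
    (Finset.mem_univ i)
  have h3 := le_max_left (-d t i) 0
  simp only [zero_mul] at h1
  linarith

open MeasureTheory Set in
lemma gs_uniq {n : ℕ} {a b : ℝ} {A : ℝ → Matrix (Fin n) (Fin n) ℝ}
    (hA : ∀ i j, ContinuousOn (fun t => A t i j) (Icc a b))
    (hA0 : ∀ t ∈ Icc a b, ∀ i j, 0 ≤ A t i j) {d : ℝ → Fin n → ℝ}
    (hd : ∀ i, ContinuousOn (fun t => d t i) (Icc a b))
    (h : ∀ t ∈ Icc a b, ∀ i, d t i = ∫ s in a..t, (A s *ᵥ d s) i) :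
    ∀ t ∈ Icc a b, ∀ i, d t i = 0 := by
  intro t ht i
  refine le_antisymm ?_ (gs_pos hA hA0 hd (fun t ht i => (h t ht i).ge) t ht i)
  have := gs_pos hA hA0 (d := fun t => -d t) (fun i => (hd i).neg) (fun t ht i => by
    simp only [mulVec_neg, Pi.neg_apply, intervalIntegral.integral_neg]
    exact neg_le_neg (h t ht i).le) t ht i
  simpa using this

open MeasureTheory Set in
lemma gs_integral_apply {n : ℕ} {a b : ℝ} {f : ℝ → Fin n → ℝ}
    (hf : ∀ i, IntervalIntegrable (fun s => f s i) volume a b) (i : Fin n) :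
    (∫ s in a..b, f s) i = ∫ s in a..b, f s i := by
  simp only [intervalIntegral, Pi.sub_apply]
  rw [eval_integral (fun i => (hf i).1), eval_integral (fun i => (hf i).2)]

open MeasureTheory Set in
/-- Main comparison. -/
lemma gs_fund {n : ℕ} {T : ℝ} (hT : 0 < T) {A : ℝ → Matrix (Fin n) (Fin n) ℝ}
    (hA : ∀ i j, ContinuousOn (fun t => A t i j) (Icc 0 T))
    (hA0 : ∀ t ∈ Icc 0 T, ∀ i j, 0 ≤ A t i j)
    (V : ℝ → ℝ → Matrix (Fin n) (Fin n) ℝ)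
    (hV : ∀ t ∈ Icc (0:ℝ) T, ∀ τ ∈ Icc (0:ℝ) T, ∀ i j,
      V t τ i j = (1 : Matrix (Fin n) (Fin n) ℝ) i j
        + ∫ s in τ..t, (A s * V s τ) i j) :
    (∀ i j, ContinuousOn (fun t => V t 0 i j) (Icc 0 T)) ∧
    (∀ i j, ContinuousOn (fun s => V 0 s i j) (Icc 0 T)) ∧
    (∀ t ∈ Icc 0 T, ∀ s ∈ Icc 0 T, V t s = V t 0 * V 0 s) ∧
    (∀ s ∈ Icc 0 T, V s 0 * V 0 s = 1) := by
  have h0 : (0:ℝ) ∈ Icc 0 T := ⟨le_rfl, hT.le⟩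
  have hcol : ∀ s τ i j, (A s * V s τ) i j = (A s *ᵥ (fun k => V s τ k j)) i := by
    intro s τ i j
    simp [mul_apply, mulVec, dotProduct]
  have hintg : ∀ τ ∈ Icc 0 T, ∀ i j,
      IntervalIntegrable (fun s => (A s * V s τ) i j) volume 0 T := by
    intro τ hτ i j
    have := gs_reg2 hτ hA (x := fun s k => V s τ k j) (c := fun k => (1 : Matrix _ _ ℝ) k j)
      (fun t ht i => by simp only [← hcol]; exact hV t ht τ hτ i j) i
    simpa only [← hcol] using this
  have hintg' : ∀ τ ∈ Icc 0 T, ∀ r ∈ Icc 0 T, ∀ t ∈ Icc 0 T, ∀ i j,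
      IntervalIntegrable (fun s => (A s * V s τ) i j) volume r t := by
    intro τ hτ r hr t ht i j
    refine (hintg τ hτ i j).mono_set ?_
    rw [uIcc_of_le hT.le]
    exact uIcc_subset_Icc hr ht
  have hV0 : ∀ τ ∈ Icc 0 T, ∀ t ∈ Icc 0 T, ∀ i j,
      V t τ i j = V 0 τ i j + ∫ s in (0:ℝ)..t, (A s * V s τ) i j := by
    intro τ hτ t ht i j
    rw [hV t ht τ hτ i j, hV 0 h0 τ hτ i j, add_assoc,
      intervalIntegral.integral_add_adjacent_intervals (hintg' τ hτ τ hτ 0 h0 i j)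
        (hintg' τ hτ 0 h0 t ht i j)]
  have hc : ∀ τ ∈ Icc 0 T, ∀ i j, ContinuousOn (fun t => V t τ i j) (Icc 0 T) := by
    intro τ hτ i j
    have h1 := intervalIntegral.continuousOn_primitive_interval' (hintg τ hτ i j) left_mem_uIcc
    rw [uIcc_of_le hT.le] at h1
    exact (continuousOn_const.add h1).congr fun t ht => hV0 τ hτ t ht i j
  have hmul : ∀ t ∈ Icc 0 T, ∀ s ∈ Icc 0 T, V t s = V t 0 * V 0 s := by
    intro t ht s hs
    ext i k
    have hVV : ∀ i, ContinuousOn (fun r => (V r 0 * V 0 s) i k) (Icc 0 T) := by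
      intro i
      simp only [mul_apply]
      exact continuousOn_finsetSum _ fun j _ => (hc 0 h0 i j).mul continuousOn_const
    have := gs_uniq hA hA0 (d := fun r i => V r s i k - (V r 0 * V 0 s) i k)
      (fun i => (hc s hs i k).sub (hVV i)) (by
        intro r hr i
        have e1 : ∀ u, (A u *ᵥ fun i => V u s i k - (V u 0 * V 0 s) i k) i
            = (A u * V u s) i k - ∑ j, (A u * V u 0) i j * V 0 s j k := by
          intro u
          rw [← mul_apply, Matrix.mul_assoc, mul_apply, mul_apply, ← Finset.sum_sub_distrib]
          simp [mulVec, dotProduct, mul_sub]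
        simp only [e1]
        have hI : ∀ j ∈ Finset.univ, IntervalIntegrable
            (fun u => (A u * V u 0) i j * V 0 s j k) volume 0 r :=
          fun j _ => (hintg' 0 h0 0 h0 r hr i j).mul_const _
        have hI' : IntervalIntegrable
            (fun u => ∑ j, (A u * V u 0) i j * V 0 s j k) volume 0 r := by
          have := IntervalIntegrable.sum _ hI
          refine this.congr fun u _ => ?_
          simp
        rw [intervalIntegral.integral_sub (hintg' s hs 0 h0 r hr i k) hI',
          intervalIntegral.integral_finsetSum hI, hV0 s hs r hr i k, mul_apply]
        simp only [intervalIntegral.integral_mul_const]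
        have e2 : ∀ j, V r 0 i j * V 0 s j k = (1 : Matrix _ _ ℝ) i j * V 0 s j k
            + (∫ u in (0:ℝ)..r, (A u * V u 0) i j) * V 0 s j k := by
          intro j; rw [hV r hr 0 h0 i j]; ring
        simp only [e2, Finset.sum_add_distrib]
        rw [← mul_apply, Matrix.one_mul]
        ring) t ht i
    simpa [sub_eq_zero] using this
  have hinv : ∀ s ∈ Icc 0 T, V s 0 * V 0 s = 1 := by
    intro s hs
    rw [← hmul s hs s hs]
    ext i j
    rw [hV s hs s hs i j]; simp
  refine ⟨hc 0 h0, ?_, hmul, hinv⟩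
  intro i j
  have hcm : ContinuousOn (fun s => V s 0) (Icc 0 T) :=
    continuousOn_pi.2 fun i => continuousOn_pi.2 fun j => hc 0 h0 i j
  have hdet : ContinuousOn (fun s => (V s 0).det) (Icc 0 T) :=
    (Continuous.matrix_det continuous_id).comp_continuousOn hcm
  have hadj : ContinuousOn (fun s => (V s 0).adjugate i j) (Icc 0 T) :=
    ((Continuous.matrix_adjugate continuous_id).matrix_elem i j).comp_continuousOn hcm
  have hne : ∀ s ∈ Icc 0 T, (V s 0).det ≠ 0 := by
    intro s hs h
    have := congrArg det (hinv s hs)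
    rw [det_mul, h] at this
    simp at this
  refine ((hdet.inv₀ hne).mul hadj).congr fun s hs => ?_
  have : V 0 s = (V s 0)⁻¹ := (inv_eq_right_inv (hinv s hs)).symm
  simp only [this, inv_def, Ring.inverse_eq_inv']
  rfl

open MeasureTheory Set in
/-- variation of constants -/
lemma gs_voc {n : ℕ} {T : ℝ} (hT : 0 < T) {A : ℝ → Matrix (Fin n) (Fin n) ℝ}
    (hA : ∀ i j, ContinuousOn (fun t => A t i j) (Icc 0 T))
    (hA0 : ∀ t ∈ Icc 0 T, ∀ i j, 0 ≤ A t i j)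
    (V : ℝ → ℝ → Matrix (Fin n) (Fin n) ℝ)
    (hV : ∀ t ∈ Icc (0:ℝ) T, ∀ τ ∈ Icc (0:ℝ) T, ∀ i j,
      V t τ i j = (1 : Matrix (Fin n) (Fin n) ℝ) i j
        + ∫ s in τ..t, (A s * V s τ) i j)
    {f : ℝ → Fin n → ℝ} (hf : ∀ i, ContinuousOn (fun t => f t i) (Icc 0 T)) :
    ∃ y : ℝ → Fin n → ℝ, (∀ t ∈ Icc 0 T, y t = ∫ s in (0:ℝ)..t, V t s *ᵥ f s) ∧
      (∀ i, ContinuousOn (fun t => y t i) (Icc 0 T)) ∧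
      ∀ t ∈ Icc 0 T, ∀ i, y t i = ∫ s in (0:ℝ)..t, ((A s *ᵥ y s) i + f s i) := by
  have h0 : (0:ℝ) ∈ Icc 0 T := ⟨le_rfl, hT.le⟩
  obtain ⟨hΦ, hΨ, hmul, hinv⟩ := gs_fund hT hA hA0 V hV
  set g : ℝ → Fin n → ℝ := fun s => V 0 s *ᵥ f s with hg
  have hgc : ∀ i, ContinuousOn (fun s => g s i) (Icc 0 T) := gs_contOn_mulVec hΨ hf
  set u : ℝ → Fin n → ℝ := fun t i => ∫ s in (0:ℝ)..t, g s i with hu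
  have hsub : ∀ t ∈ Icc 0 T, uIcc 0 t ⊆ Icc 0 T := fun t ht => uIcc_subset_Icc h0 ht
  have hprim : ∀ q : ℝ → ℝ, ContinuousOn q (Icc 0 T) →
      ContinuousOn (fun t => ∫ s in (0:ℝ)..t, q s) (Icc 0 T) ∧
      ∀ t ∈ Ioo 0 T, HasDerivAt (fun t => ∫ s in (0:ℝ)..t, q s) (q t) t := by
    intro q hq
    constructor
    · have := intervalIntegral.continuousOn_primitive_interval'
        ((hq.mono (hsub T ⟨hT.le, le_rfl⟩)).intervalIntegrable (μ := volume)) left_mem_uIcc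
      rwa [uIcc_of_le hT.le] at this
    · intro t ht
      have ht' : t ∈ Icc 0 T := ⟨ht.1.le, ht.2.le⟩
      refine intervalIntegral.integral_hasDerivAt_right
        ((hq.mono (hsub t ht')).intervalIntegrable) ?_ (hq.continuousAt (Icc_mem_nhds ht.1 ht.2))
      exact ContinuousOn.stronglyMeasurableAtFilter_nhdsWithin hq measurableSet_Icc t |>.filter_mono
        (by rw [nhdsWithin_eq_nhds.2 (Icc_mem_nhds ht.1 ht.2)])
  have huc : ∀ i, ContinuousOn (fun t => u t i) (Icc 0 T) := fun i => (hprim _ (hgc i)).1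
  have hAV : ∀ i j, ContinuousOn (fun s => (A s * V s 0) i j) (Icc 0 T) := by
    intro i j
    simp only [mul_apply]
    exact continuousOn_finsetSum _ fun k _ => (hA i k).mul (hΦ k j)
  have hyc := gs_contOn_mulVec hΦ huc
  refine ⟨fun t => V t 0 *ᵥ u t, ?_, hyc, ?_⟩
  · intro t ht
    ext i
    have hgi : ∀ i, IntervalIntegrable (fun s => g s i) volume 0 t := fun i =>
      ((hgc i).mono (hsub t ht)).intervalIntegrable
    have e : ∫ s in (0:ℝ)..t, V t s *ᵥ f s = ∫ s in (0:ℝ)..t, V t 0 *ᵥ g s := by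
      apply intervalIntegral.integral_congr
      intro s hs
      simp only [hg, mulVec_mulVec]
      rw [hmul t ht s (hsub t ht hs)]
    rw [e, gs_integral_apply (f := fun s => V t 0 *ᵥ g s) (fun i =>
      ((gs_contOn_mulVec (A := fun _ => V t 0) (fun i j => continuousOn_const) hgc i).mono (hsub t ht)).intervalIntegrable)]
    simp only [mulVec, dotProduct, hu]
    rw [intervalIntegral.integral_finsetSum fun j _ => (hgi j).const_mul _]
    simp only [intervalIntegral.integral_const_mul]
  · intro t ht i
    have hFc : ContinuousOn (fun s => (A s *ᵥ (V s 0 *ᵥ u s)) i + f s i) (Icc 0 T) :=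
      (gs_contOn_mulVec hA hyc i).add (hf i)
    have := intervalIntegral.integral_eq_sub_of_hasDerivAt_of_le ht.1
      (f := fun s => (V s 0 *ᵥ u s) i)
      (f' := fun s => (A s *ᵥ (V s 0 *ᵥ u s)) i + f s i)
      ((hyc i).mono (Icc_subset_Icc_right ht.2)) (by
        intro s hs
        have hs1 : s ∈ Ioo 0 T := ⟨hs.1, hs.2.trans_le ht.2⟩
        have hs2 : s ∈ Icc 0 T := ⟨hs1.1.le, hs1.2.le⟩
        have dV : ∀ j, HasDerivAt (fun r => V r 0 i j) ((A s * V s 0) i j) s := by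
          intro j
          refine (((hprim _ (hAV i j)).2 s hs1).const_add ((1 : Matrix _ _ ℝ) i j)).congr_of_eventuallyEq ?_
          filter_upwards [Icc_mem_nhds hs1.1 hs1.2] with r hr
          exact hV r hr 0 h0 i j
        have dy : HasDerivAt (fun r => ∑ j, V r 0 i j * u r j)
            (∑ j, ((A s * V s 0) i j * u s j + V s 0 i j * g s j)) s :=
          HasDerivAt.fun_sum fun j _ => (dV j).mul ((hprim _ (hgc j)).2 s hs1)
        have e3 : (∑ j, ((A s * V s 0) i j * u s j + V s 0 i j * g s j))
            = (A s *ᵥ (V s 0 *ᵥ u s)) i + f s i := by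
          have e4 : V s 0 *ᵥ g s = f s := by
            simp only [hg, mulVec_mulVec, hinv s hs2, one_mulVec]
          rw [Finset.sum_add_distrib, mulVec_mulVec]
          conv_rhs => rw [← e4]
          simp only [mulVec, dotProduct]
        rw [e3] at dy
        simpa only [mulVec, dotProduct] using dy)
      ((hFc.mono (hsub t ht)).intervalIntegrable)
    simp only at this ⊢
    rw [this]
    simp [hu, mulVec, dotProduct]



/-- Gronwall inequality for systems (Chandra–Davis): if z(t) ≤ a(t) + G(t) ∫₀ᵗ H(s) z(s) ds
    componentwise, with G, H continuous nonnegative matrices and V solving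
    V(t,τ) = I + ∫_τ^t H(s) G(s) V(s,τ) ds, then
    z(t) ≤ a(t) + G(t) ∫₀ᵗ V(t,s) H(s) a(s) ds componentwise. -/
theorem gronwall_for_systems (n : ℕ) (T : ℝ) (hT : 0 < T)
    (G H : ℝ → Matrix (Fin n) (Fin n) ℝ)
    (z a : ℝ → Fin n → ℝ)
    (hGcont : ∀ i j, ContinuousOn (fun t => G t i j) (Set.Icc 0 T))
    (hHcont : ∀ i j, ContinuousOn (fun t => H t i j) (Set.Icc 0 T))
    (hGnonneg : ∀ t ∈ Set.Icc (0:ℝ) T, ∀ i j, 0 ≤ G t i j)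
    (hHnonneg : ∀ t ∈ Set.Icc (0:ℝ) T, ∀ i j, 0 ≤ H t i j)
    (hzcont : ContinuousOn z (Set.Icc 0 T))
    (hacont : ContinuousOn a (Set.Icc 0 T))
    (hz : ∀ t ∈ Set.Icc (0:ℝ) T, ∀ i,
      z t i ≤ a t i + (G t *ᵥ (∫ s in (0:ℝ)..t, H s *ᵥ z s)) i)
    (V : ℝ → ℝ → Matrix (Fin n) (Fin n) ℝ)
    (hV : ∀ t ∈ Set.Icc (0:ℝ) T, ∀ τ ∈ Set.Icc (0:ℝ) T, ∀ i j,
      V t τ i j = (1 : Matrix (Fin n) (Fin n) ℝ) i j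
        + ∫ s in τ..t, (H s * G s * V s τ) i j) :
    ∀ t ∈ Set.Icc (0:ℝ) T, ∀ i,
      z t i ≤ a t i + (G t *ᵥ (∫ s in (0:ℝ)..t, V t s *ᵥ (H s *ᵥ a s))) i := by
  intro t ht i
  have h0 : (0:ℝ) ∈ Set.Icc 0 T := ⟨le_rfl, hT.le⟩
  have hsub : ∀ t ∈ Set.Icc 0 T, Set.uIcc 0 t ⊆ Set.Icc 0 T :=
    fun t ht => Set.uIcc_subset_Icc h0 ht
  have hA : ∀ i j, ContinuousOn (fun t => (H t * G t) i j) (Set.Icc 0 T) := by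
    intro i j
    simp only [mul_apply]
    exact continuousOn_finsetSum _ fun k _ => (hHcont i k).mul (hGcont k j)
  have hA0 : ∀ t ∈ Set.Icc 0 T, ∀ i j, 0 ≤ (H t * G t) i j := by
    intro t ht i j
    simp only [mul_apply]
    exact Finset.sum_nonneg fun k _ => mul_nonneg (hHnonneg t ht i k) (hGnonneg t ht k j)
  have hHz := gs_contOn_mulVec hHcont (continuousOn_pi.1 hzcont)
  have hHa := gs_contOn_mulVec hHcont (continuousOn_pi.1 hacont)
  obtain ⟨y, hy1, hyc, hy2⟩ := gs_voc hT hA hA0 V hV hHa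
  have hw : ∀ t ∈ Set.Icc 0 T, ∀ i, (∫ s in (0:ℝ)..t, H s *ᵥ z s) i
      = ∫ s in (0:ℝ)..t, (H s *ᵥ z s) i := fun t ht i =>
    gs_integral_apply (fun i => ((hHz i).mono (hsub t ht)).intervalIntegrable) i
  set w : ℝ → Fin n → ℝ := fun t => ∫ s in (0:ℝ)..t, H s *ᵥ z s with hwdef
  have hwc : ∀ i, ContinuousOn (fun t => w t i) (Set.Icc 0 T) := by
    intro i
    have := intervalIntegral.continuousOn_primitive_interval'
      (((hHz i).mono (hsub T ⟨hT.le, le_rfl⟩)).intervalIntegrable (μ := MeasureTheory.volume))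
      Set.left_mem_uIcc
    rw [Set.uIcc_of_le hT.le] at this
    exact this.congr fun t ht => hw t ht i
  have hd := gs_pos hA hA0 (d := fun t i => y t i - w t i) (fun i => (hyc i).sub (hwc i)) (by
    intro t ht i
    have c1 := gs_contOn_mulVec hA hyc i
    have c2 := gs_contOn_mulVec hA (fun i => (hyc i).sub (hwc i)) i
    have i1 : IntervalIntegrable (fun s => ((H s * G s) *ᵥ y s) i + (H s *ᵥ a s) i)
        MeasureTheory.volume 0 t := ((c1.add (hHa i)).mono (hsub t ht)).intervalIntegrable (μ := MeasureTheory.volume)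
    have i2 := ((hHz i).mono (hsub t ht)).intervalIntegrable (μ := MeasureTheory.volume)
    have i3 := (c2.mono (hsub t ht)).intervalIntegrable (μ := MeasureTheory.volume)
    have e := hw t ht i
    change w t i = _ at e
    rw [hy2 t ht i, e, ← intervalIntegral.integral_sub i1 i2]
    refine intervalIntegral.integral_mono_on ht.1 i3 (i1.sub i2) fun s hs => ?_
    have hs' : s ∈ Set.Icc 0 T := ⟨hs.1, hs.2.trans ht.2⟩
    have k1 : (H s *ᵥ z s) i ≤ (H s *ᵥ (a s + G s *ᵥ w s)) i := by
      simp only [mulVec, dotProduct]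
      exact Finset.sum_le_sum fun j _ =>
        mul_le_mul_of_nonneg_left (hz s hs' j) (hHnonneg s hs' i j)
    have k2 : ((H s * G s) *ᵥ fun i => y s i - w s i) i
        = ((H s * G s) *ᵥ y s) i - ((H s * G s) *ᵥ w s) i := by
      rw [← Pi.sub_apply, ← mulVec_sub]; rfl
    rw [mulVec_add, mulVec_mulVec, Pi.add_apply] at k1
    simp only [k2]
    linarith) t ht
  refine (hz t ht i).trans ?_
  rw [← hy1 t ht]
  gcongr
  change (G t *ᵥ w t) i ≤ _
  simp only [mulVec, dotProduct]
  exact Finset.sum_le_sum fun j _ =>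
    mul_le_mul_of_nonneg_left (by have := hd j; linarith) (hGnonneg t ht i j)
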